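/- Theorem 3.8 (dissipative theories): let h, c : Fin D → ℝ be constant vectors with Σ_μ c μ · h μ = 2, and let U : ℝ → ℝ be smooth satisfying u·U'(u) = 2·U(u) for all u (homogeneity of degree 2). Let φ : (Fin D → ℝ) → ℝ be a smooth solution of the Euler–Lagrange equation of the dissipative Lagrangian density L(x,u,p) = exp(Σ_λ h λ · x λ)·((1/2)·Σ_{μ,ν} η μ ν · p_μ · p_ν − U(u)), i.e. of the PDE □φ x + Σ_μ h μ · ∂^μ φ x + U'(φ x) = 0 for all x. With the (not conserved) tensor T_L^{μν} x := ∂^μ φ x · ∂^ν φ x − η μ ν·((1/2)·Σ_{α,β} η α β·∂_α φ x·∂_β φ x − U(φ x)) and lowered components c_ν := Σ_α η ν α · c α, the current j^μ x := exp(Σ_λ h λ · x λ)·( φ x · ∂^μ φ x + Σ_ν c_ν · T_L^{μν} x ) is conserved: Σ_μ ∂_μ j^μ x = 0 for all x. (The paper's choice is the particular vector written c_ν = 2 h_ν^{-1}; any constant c with Σ_μ c μ · h μ = 2 works.) -/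

import Mathlib

open scoped BigOperators

noncomputable section

/-- Minkowski metric on `Fin D`. -/
def eta (D : ℕ) (μ ν : Fin D) : ℝ :=
  if μ = ν then (if (μ : ℕ) = 0 then 1 else -1) else 0

/-- Spacetime partial derivative `∂_μ F x`. -/
def pd {D : ℕ} (F : (Fin D → ℝ) → ℝ) (μ : Fin D) (x : Fin D → ℝ) : ℝ :=
  fderiv ℝ F x (Pi.single μ 1)

/-- Raised-index partial derivative `∂^μ F x`. -/
def pdu {D : ℕ} (F : (Fin D → ℝ) → ℝ) (μ : Fin D) (x : Fin D → ℝ) : ℝ :=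
  ∑ ν, eta D μ ν * pd F ν x

/-- d'Alembertian `□F x`. -/
def box {D : ℕ} (F : (Fin D → ℝ) → ℝ) (x : Fin D → ℝ) : ℝ :=
  ∑ μ, pd (fun y => pdu F μ y) μ x

/-!
For arbitrary `φ` the energy-momentum tensor satisfies `∂_μ T_L^{μν} = (□φ + U'(φ)) ∂^ν φ`, and the
weight `exp (h · x)` contributes `h_μ j^μ` to the divergence. Since `c · h = 2`, the term
`-(c · h) ((1/2) ∂_α φ ∂^α φ - U(φ))` in `h_μ j^μ` cancels the `∂_μ φ ∂^μ φ` coming from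
`∂_μ (φ ∂^μ φ)` and leaves `2 U(φ) = φ U'(φ)`. Everything that remains is `φ + c^ν ∂_ν φ` times the
left-hand side of the field equation.
-/

section MetricDual

variable {D : ℕ}

/-- The vector `η v`: the index of a constant vector or covector lowered or raised with the
Minkowski metric. One map serves both purposes because `η` is its own inverse. -/
def metricDual (v : Fin D → ℝ) (μ : Fin D) : ℝ :=
  ∑ ν, eta D μ ν * v ν

lemma eta_comm (μ ν : Fin D) : eta D μ ν = eta D ν μ := by
  unfold eta
  grind

lemma metricDual_eq_eta_self_mul (v : Fin D → ℝ) (μ : Fin D) :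
    metricDual v μ = eta D μ μ * v μ := by
  simp [metricDual, eta]

lemma metricDual_metricDual (v : Fin D → ℝ) : metricDual (metricDual v) = v := by
  funext μ
  have eta_self_mul_self : eta D μ μ * eta D μ μ = 1 := by
    unfold eta
    grind
  rw [metricDual_eq_eta_self_mul, metricDual_eq_eta_self_mul, ← mul_assoc, eta_self_mul_self,
    one_mul]

lemma sum_metricDual_mul (v w : Fin D → ℝ) :
    ∑ μ, metricDual v μ * w μ = ∑ μ, v μ * metricDual w μ := by
  refine Finset.sum_congr rfl fun μ _ => ?_
  rw [metricDual_eq_eta_self_mul, metricDual_eq_eta_self_mul]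
  ring

end MetricDual

section PartialDerivatives

variable {D : ℕ} {F G : (Fin D → ℝ) → ℝ} {x : Fin D → ℝ}

lemma pd_add (hF : DifferentiableAt ℝ F x) (hG : DifferentiableAt ℝ G x) (μ : Fin D) :
    pd (fun y => F y + G y) μ x = pd F μ x + pd G μ x := by
  simp [pd, fderiv_fun_add hF hG]

lemma pd_sub (hF : DifferentiableAt ℝ F x) (hG : DifferentiableAt ℝ G x) (μ : Fin D) :
    pd (fun y => F y - G y) μ x = pd F μ x - pd G μ x := by
  simp [pd, fderiv_fun_sub hF hG]

lemma pd_mul (hF : DifferentiableAt ℝ F x) (hG : DifferentiableAt ℝ G x) (μ : Fin D) :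
    pd (fun y => F y * G y) μ x = F x * pd G μ x + pd F μ x * G x := by
  simp [pd, fderiv_fun_mul hF hG, mul_comm]

lemma pd_const_mul (hF : DifferentiableAt ℝ F x) (a : ℝ) (μ : Fin D) :
    pd (fun y => a * F y) μ x = a * pd F μ x := by
  simp [pd, fderiv_const_mul hF]

lemma pd_sum {ι : Type*} {s : Finset ι} {f : ι → (Fin D → ℝ) → ℝ}
    (hf : ∀ i ∈ s, DifferentiableAt ℝ (f i) x) (μ : Fin D) :
    pd (fun y => ∑ i ∈ s, f i y) μ x = ∑ i ∈ s, pd (f i) μ x := by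
  simp [pd, fderiv_fun_sum hf]

lemma pd_comp {f : ℝ → ℝ} (hf : DifferentiableAt ℝ f (F x)) (hF : DifferentiableAt ℝ F x)
    (μ : Fin D) : pd (fun y => f (F y)) μ x = deriv f (F x) * pd F μ x := by
  have chain_rule : HasFDerivAt (fun y => f (F y)) (deriv f (F x) • fderiv ℝ F x) x :=
    hf.hasDerivAt.comp_hasFDerivAt x hF.hasFDerivAt
  simp [pd, chain_rule.fderiv]

lemma pd_coord (μ ν : Fin D) : pd (fun y => y ν) μ x = (Pi.single μ 1 : Fin D → ℝ) ν := by
  simp [pd, (hasFDerivAt_apply ν x).fderiv]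

lemma pd_exp_linear (h : Fin D → ℝ) (μ : Fin D) :
    pd (fun y => Real.exp (∑ lam, h lam * y lam)) μ x =
      Real.exp (∑ lam, h lam * x lam) * h μ := by
  have pd_linear : pd (fun y => ∑ lam, h lam * y lam) μ x = h μ := by
    rw [pd_sum (by fun_prop)]
    simp [pd_const_mul (differentiableAt_apply _ x), pd_coord, Pi.single_apply]
  rw [pd_comp Real.differentiableAt_exp (by fun_prop), Real.deriv_exp, pd_linear]

lemma differentiableAt_fderiv {E : Type*} [NormedAddCommGroup E] [NormedSpace ℝ E] {f : E → ℝ}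
    {a : E} (hf : ContDiffAt ℝ 2 f a) : DifferentiableAt ℝ (fderiv ℝ f) a :=
  (hf.fderiv_right (m := 1) (by norm_num)).differentiableAt (by norm_num)

lemma differentiableAt_pd (hF : ContDiffAt ℝ 2 F x) (μ : Fin D) :
    DifferentiableAt ℝ (pd F μ) x :=
  (differentiableAt_fderiv hF).clm_apply (differentiableAt_const _)

lemma differentiableAt_pdu (hF : ContDiffAt ℝ 2 F x) (μ : Fin D) :
    DifferentiableAt ℝ (pdu F μ) x :=
  DifferentiableAt.fun_sum fun ν _ => (differentiableAt_pd hF ν).const_mul _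

lemma pd_pd_comm (hF : ContDiffAt ℝ 2 F x) (μ ν : Fin D) :
    pd (pd F μ) ν x = pd (pd F ν) μ x := by
  have pd_pd_eq (α β : Fin D) :
      pd (pd F α) β x = fderiv ℝ (fderiv ℝ F) x (Pi.single β 1) (Pi.single α 1) := by
    change fderiv ℝ (fun y => fderiv ℝ F y (Pi.single α 1)) x (Pi.single β 1) = _
    simp [fderiv_clm_apply (differentiableAt_fderiv hF) (differentiableAt_const _)]
  rw [pd_pd_eq, pd_pd_eq]
  exact (hF.isSymmSndFDerivAt (by simp)).eq _ _

lemma pd_pdu (hF : ContDiffAt ℝ 2 F x) (μ ν : Fin D) :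
    pd (pdu F μ) ν x = metricDual (fun α => pd (pd F α) ν x) μ := by
  unfold pdu metricDual
  rw [pd_sum fun α _ => (differentiableAt_pd hF α).const_mul _]
  exact Finset.sum_congr rfl fun α _ => pd_const_mul (differentiableAt_pd hF α) _ ν

lemma sum_metricDual_mul_pdu (c : Fin D → ℝ) :
    ∑ μ, metricDual c μ * pdu F μ x = ∑ μ, c μ * pd F μ x := by
  change ∑ μ, metricDual c μ * metricDual (fun ν => pd F ν x) μ = _
  rw [sum_metricDual_mul, metricDual_metricDual]

end PartialDerivatives

section Divergence

variable {D : ℕ} {F : (Fin D → ℝ) → ℝ} {J K : Fin D → (Fin D → ℝ) → ℝ} {x : Fin D → ℝ}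

/-- The divergence `∂_μ J^μ` of a vector field given by its components `J μ`. -/
def divergence (J : Fin D → (Fin D → ℝ) → ℝ) (x : Fin D → ℝ) : ℝ :=
  ∑ μ, pd (J μ) μ x

lemma divergence_add (hJ : ∀ μ, DifferentiableAt ℝ (J μ) x)
    (hK : ∀ μ, DifferentiableAt ℝ (K μ) x) :
    divergence (fun μ y => J μ y + K μ y) x = divergence J x + divergence K x := by
  simp only [divergence, pd_add (hJ _) (hK _), Finset.sum_add_distrib]

lemma divergence_sub (hJ : ∀ μ, DifferentiableAt ℝ (J μ) x)
    (hK : ∀ μ, DifferentiableAt ℝ (K μ) x) :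
    divergence (fun μ y => J μ y - K μ y) x = divergence J x - divergence K x := by
  simp only [divergence, pd_sub (hJ _) (hK _), Finset.sum_sub_distrib]

lemma divergence_mul (hF : DifferentiableAt ℝ F x) (hJ : ∀ μ, DifferentiableAt ℝ (J μ) x) :
    divergence (fun μ y => F y * J μ y) x = F x * divergence J x + ∑ μ, pd F μ x * J μ x := by
  simp only [divergence, pd_mul hF (hJ _), Finset.sum_add_distrib, Finset.mul_sum]

lemma divergence_sum_const_mul {T : Fin D → Fin D → (Fin D → ℝ) → ℝ}
    (hT : ∀ μ ν, DifferentiableAt ℝ (T μ ν) x) (b : Fin D → ℝ) :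
    divergence (fun μ y => ∑ ν, b ν * T μ ν y) x =
      ∑ ν, b ν * divergence (fun μ => T μ ν) x := by
  simp only [divergence, pd_sum fun ν _ => (hT _ ν).const_mul (b ν), pd_const_mul (hT _ _),
    Finset.mul_sum]
  exact Finset.sum_comm

lemma divergence_eta_mul (hF : DifferentiableAt ℝ F x) (ν : Fin D) :
    divergence (fun μ y => eta D μ ν * F y) x = pdu F ν x := by
  simp only [divergence, pdu, pd_const_mul hF, eta_comm ν]

lemma divergence_exp_linear_mul (h : Fin D → ℝ) (hJ : ∀ μ, DifferentiableAt ℝ (J μ) x) :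
    divergence (fun μ y => Real.exp (∑ lam, h lam * y lam) * J μ y) x =
      Real.exp (∑ lam, h lam * x lam) * (divergence J x + ∑ μ, h μ * J μ x) := by
  rw [divergence_mul (by fun_prop) hJ]
  simp only [pd_exp_linear, mul_add, Finset.mul_sum, mul_assoc]

end Divergence

section ScalarField

variable {D : ℕ} {U : ℝ → ℝ} {φ : (Fin D → ℝ) → ℝ} {x : Fin D → ℝ}

/-- The Lorentz square `η^{αβ} ∂_α φ ∂_β φ` of the gradient of `φ`. -/
def gradSq (φ : (Fin D → ℝ) → ℝ) (x : Fin D → ℝ) : ℝ :=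
  ∑ α, ∑ β, eta D α β * pd φ α x * pd φ β x

/-- The Lagrangian density of the scalar field with potential `U`, without the dissipative factor
`exp (h · x)`, evaluated along `φ`. -/
def lagrangian (U : ℝ → ℝ) (φ : (Fin D → ℝ) → ℝ) (x : Fin D → ℝ) : ℝ :=
  (1/2) * gradSq φ x - U (φ x)

/-- The energy-momentum tensor `T_L^{μν}`, both indices raised. -/
def stressTensor (U : ℝ → ℝ) (φ : (Fin D → ℝ) → ℝ) (μ ν : Fin D) (x : Fin D → ℝ) : ℝ :=
  pdu φ μ x * pdu φ ν x - eta D μ ν * lagrangian U φ x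

/-- The current `φ ∂^μ φ + c_ν T_L^{μν}` without the dissipative factor `exp (h · x)`, where `c` is
given by its upper components. -/
def undampedCurrent (c : Fin D → ℝ) (U : ℝ → ℝ) (φ : (Fin D → ℝ) → ℝ) (μ : Fin D)
    (x : Fin D → ℝ) : ℝ :=
  φ x * pdu φ μ x + ∑ ν, metricDual c ν * stressTensor U φ μ ν x

lemma gradSq_eq_sum_pd_mul_pdu (φ : (Fin D → ℝ) → ℝ) (x : Fin D → ℝ) :
    gradSq φ x = ∑ μ, pd φ μ x * pdu φ μ x := by
  simp only [gradSq, pdu, Finset.mul_sum]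
  exact Finset.sum_congr rfl fun μ _ => Finset.sum_congr rfl fun ν _ => by ring

lemma differentiableAt_gradSq (hφ : ContDiffAt ℝ 2 φ x) : DifferentiableAt ℝ (gradSq φ) x := by
  rw [funext (gradSq_eq_sum_pd_mul_pdu φ)]
  exact DifferentiableAt.fun_sum fun μ _ =>
    (differentiableAt_pd hφ μ).mul (differentiableAt_pdu hφ μ)

lemma pd_gradSq (hφ : ContDiffAt ℝ 2 φ x) (ν : Fin D) :
    pd (gradSq φ) ν x = 2 * ∑ μ, pdu φ μ x * pd (pd φ ν) μ x := by
  have move_metric : ∑ μ, pd φ μ x * pd (pdu φ μ) ν x = ∑ μ, pdu φ μ x * pd (pd φ μ) ν x := by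
    simp only [pd_pdu hφ]
    exact (sum_metricDual_mul (fun μ => pd φ μ x) fun μ => pd (pd φ μ) ν x).symm
  rw [funext (gradSq_eq_sum_pd_mul_pdu φ),
    pd_sum fun μ _ => (differentiableAt_pd hφ μ).fun_mul (differentiableAt_pdu hφ μ)]
  simp only [pd_mul (differentiableAt_pd hφ _) (differentiableAt_pdu hφ _),
    Finset.sum_add_distrib, move_metric, pd_pd_comm hφ ν, mul_comm (pd (pd φ _) ν x)]
  ring

lemma differentiableAt_lagrangian (hU : DifferentiableAt ℝ U (φ x)) (hφ : ContDiffAt ℝ 2 φ x) :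
    DifferentiableAt ℝ (lagrangian U φ) x :=
  ((differentiableAt_gradSq hφ).const_mul _).sub
    (hU.comp x (hφ.differentiableAt (by norm_num)))

lemma pd_lagrangian (hU : DifferentiableAt ℝ U (φ x)) (hφ : ContDiffAt ℝ 2 φ x) (ν : Fin D) :
    pd (lagrangian U φ) ν x =
      ∑ μ, pdu φ μ x * pd (pd φ ν) μ x - deriv U (φ x) * pd φ ν x := by
  have differentiableAt_φ : DifferentiableAt ℝ φ x := hφ.differentiableAt (by norm_num)
  unfold lagrangian
  rw [pd_sub ((differentiableAt_gradSq hφ).const_mul _) (hU.fun_comp' x differentiableAt_φ),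
    pd_const_mul (differentiableAt_gradSq hφ), pd_gradSq hφ, pd_comp hU differentiableAt_φ]
  ring

lemma pdu_lagrangian (hU : DifferentiableAt ℝ U (φ x)) (hφ : ContDiffAt ℝ 2 φ x) (ν : Fin D) :
    pdu (lagrangian U φ) ν x =
      ∑ μ, pd (pdu φ ν) μ x * pdu φ μ x - deriv U (φ x) * pdu φ ν x := by
  change metricDual (fun α => pd (lagrangian U φ) α x) ν = _ - _ * metricDual (pd φ · x) ν
  simp only [pd_lagrangian hU hφ, pd_pdu hφ, metricDual_eq_eta_self_mul, mul_sub, Finset.mul_sum]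
  congr 1
  · exact Finset.sum_congr rfl fun μ _ => by ring
  · ring

lemma differentiableAt_stressTensor (hU : DifferentiableAt ℝ U (φ x)) (hφ : ContDiffAt ℝ 2 φ x)
    (μ ν : Fin D) : DifferentiableAt ℝ (stressTensor U φ μ ν) x :=
  ((differentiableAt_pdu hφ μ).mul (differentiableAt_pdu hφ ν)).sub
    ((differentiableAt_lagrangian hU hφ).const_mul _)

lemma divergence_stressTensor (hU : DifferentiableAt ℝ U (φ x)) (hφ : ContDiffAt ℝ 2 φ x)
    (ν : Fin D) :
    divergence (fun μ => stressTensor U φ μ ν) x =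
      (box φ x + deriv U (φ x)) * pdu φ ν x := by
  have divergence_pdu_mul_pdu : divergence (fun μ y => pdu φ μ y * pdu φ ν y) x =
      pdu φ ν x * box φ x + ∑ μ, pd (pdu φ ν) μ x * pdu φ μ x := by
    simp only [mul_comm (pdu φ _ _) (pdu φ ν _)]
    exact divergence_mul (differentiableAt_pdu hφ ν) (differentiableAt_pdu hφ)
  have differentiableAt_L := differentiableAt_lagrangian hU hφ
  unfold stressTensor
  rw [divergence_sub (fun μ => (differentiableAt_pdu hφ μ).fun_mul (differentiableAt_pdu hφ ν))
      fun μ => differentiableAt_L.const_mul _,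
    divergence_pdu_mul_pdu, divergence_eta_mul differentiableAt_L, pdu_lagrangian hU hφ]
  ring

lemma sum_metricDual_mul_stressTensor (c : Fin D → ℝ) (μ : Fin D) :
    ∑ ν, metricDual c ν * stressTensor U φ μ ν x =
      pdu φ μ x * ∑ ν, c ν * pd φ ν x - c μ * lagrangian U φ x := by
  have eta_contraction : ∑ ν, eta D μ ν * metricDual c ν = c μ :=
    congrFun (metricDual_metricDual c) μ
  rw [← sum_metricDual_mul_pdu, ← eta_contraction, Finset.mul_sum, Finset.sum_mul,
    ← Finset.sum_sub_distrib]
  exact Finset.sum_congr rfl fun ν _ => by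
    unfold stressTensor
    ring

lemma differentiableAt_undampedCurrent (c : Fin D → ℝ) (hU : DifferentiableAt ℝ U (φ x))
    (hφ : ContDiffAt ℝ 2 φ x) (μ : Fin D) : DifferentiableAt ℝ (undampedCurrent c U φ μ) x :=
  ((hφ.differentiableAt (by norm_num)).mul (differentiableAt_pdu hφ μ)).add <|
    DifferentiableAt.fun_sum fun ν _ => (differentiableAt_stressTensor hU hφ μ ν).const_mul _

lemma divergence_undampedCurrent (c : Fin D → ℝ) (hU : DifferentiableAt ℝ U (φ x))
    (hφ : ContDiffAt ℝ 2 φ x) :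
    divergence (undampedCurrent c U φ) x =
      φ x * box φ x + gradSq φ x + (box φ x + deriv U (φ x)) * ∑ ν, c ν * pd φ ν x := by
  have differentiableAt_φ : DifferentiableAt ℝ φ x := hφ.differentiableAt (by norm_num)
  have differentiableAt_T := differentiableAt_stressTensor hU hφ
  have divergence_mul_pdu :
      divergence (fun μ y => φ y * pdu φ μ y) x = φ x * box φ x + gradSq φ x := by
    rw [gradSq_eq_sum_pd_mul_pdu]
    exact divergence_mul differentiableAt_φ (differentiableAt_pdu hφ)
  have divergence_contraction :
      divergence (fun μ y => ∑ ν, metricDual c ν * stressTensor U φ μ ν y) x =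
        (box φ x + deriv U (φ x)) * ∑ ν, c ν * pd φ ν x := by
    rw [divergence_sum_const_mul differentiableAt_T, ← sum_metricDual_mul_pdu, Finset.mul_sum]
    simp only [divergence_stressTensor hU hφ, mul_left_comm]
  unfold undampedCurrent
  rw [divergence_add (fun μ => differentiableAt_φ.fun_mul (differentiableAt_pdu hφ μ))
      fun μ => DifferentiableAt.fun_sum fun ν _ => (differentiableAt_T μ ν).const_mul _,
    divergence_mul_pdu, divergence_contraction]

lemma sum_mul_undampedCurrent (h c : Fin D → ℝ) :
    ∑ μ, h μ * undampedCurrent c U φ μ x =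
      (φ x + ∑ ν, c ν * pd φ ν x) * ∑ μ, h μ * pdu φ μ x -
        (∑ μ, c μ * h μ) * lagrangian U φ x := by
  simp only [undampedCurrent, sum_metricDual_mul_stressTensor]
  rw [Finset.mul_sum, Finset.sum_mul, ← Finset.sum_sub_distrib]
  exact Finset.sum_congr rfl fun μ _ => by ring

/-- Noether's identity off shell: `φ + c^ν ∂_ν φ` is the characteristic of the underlying
symmetry. -/
theorem dissipative_theory_conserved_current_general {h c : Fin D → ℝ}
    (hch : ∑ μ, c μ * h μ = 2) (hU : DifferentiableAt ℝ U (φ x))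
    (hhom : φ x * deriv U (φ x) = 2 * U (φ x)) (hφ : ContDiffAt ℝ 2 φ x) :
    divergence (fun μ y => Real.exp (∑ lam, h lam * y lam) * undampedCurrent c U φ μ y) x =
      Real.exp (∑ lam, h lam * x lam) * ((φ x + ∑ ν, c ν * pd φ ν x) *
        (box φ x + (∑ μ, h μ * pdu φ μ x) + deriv U (φ x))) := by
  rw [divergence_exp_linear_mul h (differentiableAt_undampedCurrent c hU hφ),
    divergence_undampedCurrent c hU hφ, sum_mul_undampedCurrent, hch, lagrangian]
  congr 1
  linear_combination -hhom

end ScalarField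

/-- Theorem 3.8: conserved current of dissipative theories with a homogeneous
potential of degree 2. -/
theorem dissipative_theory_conserved_current {D : ℕ} (hD : 1 ≤ D)
    (h c : Fin D → ℝ) (hch : ∑ μ, c μ * h μ = 2)
    (U : ℝ → ℝ) (hU : ContDiff ℝ (⊤ : ℕ∞) U)
    (hhom : ∀ u : ℝ, u * deriv U u = 2 * U u)
    (φ : (Fin D → ℝ) → ℝ) (hφ : ContDiff ℝ (⊤ : ℕ∞) φ)
    (hEL : ∀ x, box φ x + (∑ μ, h μ * pdu φ μ x) + deriv U (φ x) = 0) :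
    ∀ x, ∑ μ, pd (fun y =>
        Real.exp (∑ lam, h lam * y lam) *
          (φ y * pdu φ μ y +
            ∑ ν, (∑ α, eta D ν α * c α) *
              (pdu φ μ y * pdu φ ν y -
                eta D μ ν * ((1/2) * (∑ α, ∑ β, eta D α β * pd φ α y * pd φ β y) -
                  U (φ y)))) ) μ x = 0 := by
  intro x
  have noether_identity := dissipative_theory_conserved_current_general hch
    (hU.differentiable (by simp) (φ x)) (hhom (φ x))
    (contDiff_infty.mp hφ 2).contDiffAt
  rwa [hEL x, mul_zero, mul_zero] at noether_identity

end
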